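/- arXiv:math/0512449 — 5 statements merged into one kernel-verified Lean document; each statement's English description precedes it below -/
import Mathlib

section
/- Let K be a field and let u1, v1, u2, v2 ∈ K[t] be polynomials with v1 ≠ 0, v2 ≠ 0, gcd(u1, v1) = 1 and gcd(u2, v2) = 1. Let F ∈ K[x,y] be an irreducible bivariate polynomial such that F(u1(t)/v1(t), u2(t)/v2(t)) = 0 in the field K(t) of rational functions, and suppose the parametrization is proper, i.e., the subfield of K(t) generated over K by u1/v1 and u2/v2 is all of K(t). Then the degree of F in the variable y equals max(deg u1, deg v1), and the degree of F in the variable x equals max(deg u2, deg v2). -/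
open IntermediateField in
theorem aux_poly {K : Type*} [Field K] (f g : RatFunc K) (G : Polynomial (Polynomial K))
    (hG : Irreducible G)
    (h0 : Polynomial.eval₂ (Polynomial.aeval f : Polynomial K →ₐ[K] RatFunc K).toRingHom g G = 0)
    (htop : IntermediateField.adjoin K ({f, g} : Set (RatFunc K)) = ⊤) :
    G.natDegree = max f.num.natDegree f.denom.natDegree := by
  by_cases hf : ∃ c, f = RatFunc.C c
  · obtain ⟨c, rfl⟩ := hf
    have hg : ¬ ∃ d, g = RatFunc.C d := by
      rintro ⟨d, rfl⟩
      have hle : IntermediateField.adjoin K ({RatFunc.C c, RatFunc.C d} : Set (RatFunc K)) ≤ ⊥ := by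
        rw [IntermediateField.adjoin_le_iff]
        rintro x (rfl | rfl)
        · exact ⟨c, rfl⟩
        · exact ⟨d, rfl⟩
      rw [htop] at hle
      obtain ⟨a, ha⟩ := hle (show (RatFunc.X : RatFunc K) ∈ ⊤ from trivial)
      have h1 : algebraMap (Polynomial K) (RatFunc K) (Polynomial.C a)
          = algebraMap (Polynomial K) (RatFunc K) Polynomial.X := by
        rw [RatFunc.algebraMap_C, RatFunc.algebraMap_X]; exact ha
      have h2 := RatFunc.algebraMap_injective K h1
      exact Polynomial.X_ne_C a h2.symm
    have htr := RatFunc.transcendental_of_ne_C g hg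
    have hmap : G.map (Polynomial.evalRingHom c) = 0 := by
      by_contra hne
      refine htr ⟨_, hne, ?_⟩
      rw [Polynomial.aeval_def, Polynomial.eval₂_map]
      rw [← h0]
      congr 1
      ext a
      · simp
      · simp [RatFunc.algebraMap_eq_C]
    have hdvd : Polynomial.C (Polynomial.X - Polynomial.C c) ∣ G := by
      rw [Polynomial.C_dvd_iff_dvd_coeff]
      intro i
      rw [Polynomial.dvd_iff_isRoot]
      have := congrArg (fun p => Polynomial.coeff p i) hmap
      simpa using this
    have hnu : ¬ IsUnit (Polynomial.C (Polynomial.X - Polynomial.C c)) := by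
      rw [Polynomial.isUnit_C]
      exact Polynomial.not_isUnit_X_sub_C c
    obtain ⟨q, hq⟩ := hdvd
    have hu := (hG.isUnit_or_isUnit hq).resolve_left hnu
    have : G.natDegree ≤ 0 := by
      rw [hq]
      refine (Polynomial.natDegree_C_mul_le _ _).trans ?_
      rw [Polynomial.natDegree_eq_zero_of_isUnit hu]
    simp; omega
  · have htr := RatFunc.transcendental_of_ne_C f hf
    have hdeg : G.natDegree ≠ 0 := by
      intro hd
      rw [Polynomial.eq_C_of_natDegree_eq_zero hd] at h0
      rw [Polynomial.eval₂_C] at h0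
      refine htr ⟨G.coeff 0, ?_, h0⟩
      intro hz
      apply hG.ne_zero
      rw [Polynomial.eq_C_of_natDegree_eq_zero hd, hz, map_zero]
    have hprim := hG.isPrimitive hdeg
    have hirr := (hprim.irreducible_iff_irreducible_map_fraction_map (K := RatFunc K)).1 hG
    let e := RatFunc.algEquivOfTranscendental f htr
    let P : Polynomial K⟮f⟯ := Polynomial.mapEquiv e.toRingEquiv (G.map (algebraMap _ (RatFunc K)))
    have hP : Irreducible P := (MulEquiv.irreducible_iff (Polynomial.mapEquiv e.toRingEquiv)).2 hirr
    have hPdeg : P.natDegree = G.natDegree := by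
      simp only [P, Polynomial.mapEquiv_apply]
      rw [Polynomial.natDegree_map_eq_of_injective (f := (e.toRingEquiv : RatFunc K →+* K⟮f⟯)) e.injective]
      rw [Polynomial.natDegree_map_eq_of_injective (RatFunc.algebraMap_injective K)]
    have hroot : Polynomial.aeval g P = 0 := by
      simp only [P, Polynomial.mapEquiv_apply]
      rw [Polynomial.aeval_def, Polynomial.eval₂_map, Polynomial.eval₂_map, ← h0]
      congr 1
      ext a
      · simp [e, RatFunc.algEquivOfTranscendental_algebraMap, -RatFunc.algebraMap_C]
      · simp [e, RatFunc.algEquivOfTranscendental_algebraMap, -RatFunc.algebraMap_X]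
    have hint : IsIntegral K⟮f⟯ g := IsAlgebraic.isIntegral ⟨P, hP.ne_zero, hroot⟩
    have htop' : (K⟮f⟯)⟮g⟯ = ⊤ := by
      rw [← restrictScalars_eq_top_iff (K := K), adjoin_simple_adjoin_simple, htop]
    rw [← RatFunc.finrank_eq_max_natDegree, ← hPdeg, ← finrank_top', ← htop',
      adjoin.finrank hint, ← minpoly.eq_of_irreducible hP hroot, mul_comm,
      Polynomial.natDegree_C_mul (inv_ne_zero (Polynomial.leadingCoeff_ne_zero.mpr hP.ne_zero))]

theorem aux_mv {K : Type*} [Field K] (f g : RatFunc K) (F : MvPolynomial (Fin 2) K)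
    (hF : Irreducible F) (h0 : MvPolynomial.aeval ![g, f] F = 0)
    (htop : IntermediateField.adjoin K ({f, g} : Set (RatFunc K)) = ⊤) :
    MvPolynomial.degreeOf 0 F = max f.num.natDegree f.denom.natDegree := by
  let e1 := MvPolynomial.finSuccEquiv K 1
  let e2 := MvPolynomial.uniqueAlgEquiv K (Fin 1)
  let e3 := Polynomial.mapEquiv e2.toRingEquiv
  have hirr : Irreducible (e3 (e1 F)) :=
    (MulEquiv.irreducible_iff e3).2 ((MulEquiv.irreducible_iff e1).2 hF)
  have hdeg : (e3 (e1 F)).natDegree = MvPolynomial.degreeOf 0 F := by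
    rw [← MvPolynomial.natDegree_finSuccEquiv]
    simp only [e3, Polynomial.mapEquiv_apply]
    rw [Polynomial.natDegree_map_eq_of_injective e2.toRingEquiv.injective]
  rw [← hdeg]
  refine aux_poly f g _ hirr ?_ htop
  rw [← h0]
  let φ : MvPolynomial (Fin 2) K →+* RatFunc K :=
    ((Polynomial.eval₂RingHom (Polynomial.aeval f : Polynomial K →ₐ[K] RatFunc K).toRingHom g).comp
      e3.toRingHom).comp (e1.toRingEquiv.toRingHom)
  have : φ = (MvPolynomial.aeval ![g, f] : MvPolynomial (Fin 2) K →ₐ[K] RatFunc K).toRingHom := by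
    apply MvPolynomial.ringHom_ext
    · intro r
      simp [φ, e3, e1, e2, MvPolynomial.finSuccEquiv_apply, MvPolynomial.uniqueAlgEquiv]
    · intro i
      fin_cases i <;>
      simp [φ, e3, e1, e2, MvPolynomial.finSuccEquiv_apply, MvPolynomial.uniqueAlgEquiv]
      rw [show (Fin.cases Polynomial.X (fun k => Polynomial.C (MvPolynomial.X k)) (1 : Fin 2) :
        Polynomial (MvPolynomial (Fin 1) K)) = Polynomial.C (MvPolynomial.X 0) from rfl]
      simp
  exact congrArg (fun h => h F) this

theorem aux_deg {K : Type*} [Field K] (u v : Polynomial K) (hv : v ≠ 0) (h : IsCoprime u v) :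
    max (algebraMap (Polynomial K) (RatFunc K) u / algebraMap (Polynomial K) (RatFunc K) v).num.natDegree
      (algebraMap (Polynomial K) (RatFunc K) u / algebraMap (Polynomial K) (RatFunc K) v).denom.natDegree
    = max u.natDegree v.natDegree := by
  set f := algebraMap (Polynomial K) (RatFunc K) u / algebraMap (Polynomial K) (RatFunc K) v with hf
  have hn := RatFunc.num_div_denom f
  have hv' : algebraMap (Polynomial K) (RatFunc K) v ≠ 0 := RatFunc.algebraMap_ne_zero hv
  have hd' : algebraMap (Polynomial K) (RatFunc K) f.denom ≠ 0 :=
    RatFunc.algebraMap_ne_zero f.denom_ne_zero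
  have he : f.num * v = u * f.denom := by
    apply RatFunc.algebraMap_injective K
    rw [map_mul, map_mul]
    rw [← div_eq_div_iff hd' hv', hn]
  have hc := f.isCoprime_num_denom
  have hden : Associated f.denom v := associated_of_dvd_dvd
    (hc.symm.dvd_of_dvd_mul_left ⟨u, by rw [he, mul_comm]⟩)
    (h.symm.dvd_of_dvd_mul_left ⟨f.num, by rw [← he, mul_comm]⟩)
  have hnum : Associated f.num u := associated_of_dvd_dvd
    (hc.dvd_of_dvd_mul_right ⟨v, by rw [← he]⟩)
    (h.dvd_of_dvd_mul_right ⟨f.denom, by rw [he]⟩)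
  rw [Polynomial.natDegree_eq_of_degree_eq (Polynomial.degree_eq_degree_of_associated hden),
    Polynomial.natDegree_eq_of_degree_eq (Polynomial.degree_eq_degree_of_associated hnum)]


/-- **Theorem 1 (degree of the implicit equation).**
If `(u1/v1, u2/v2)` is a proper rational parametrization in lowest terms of the
irreducible curve defined by `F`, then `deg_y F = max(deg u1, deg v1)` and
`deg_x F = max(deg u2, deg v2)`. -/
theorem degree_of_implicit_equation
    (K : Type*) [Field K]
    (u1 v1 u2 v2 : Polynomial K)
    (hv1 : v1 ≠ 0) (hv2 : v2 ≠ 0)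
    (hcop1 : IsCoprime u1 v1) (hcop2 : IsCoprime u2 v2)
    (F : MvPolynomial (Fin 2) K) (hF : Irreducible F)
    (hvanish :
      MvPolynomial.aeval
        ![algebraMap (Polynomial K) (RatFunc K) u1 / algebraMap (Polynomial K) (RatFunc K) v1,
          algebraMap (Polynomial K) (RatFunc K) u2 / algebraMap (Polynomial K) (RatFunc K) v2]
        F = 0)
    (hproper :
      IntermediateField.adjoin K
        ({algebraMap (Polynomial K) (RatFunc K) u1 / algebraMap (Polynomial K) (RatFunc K) v1,
          algebraMap (Polynomial K) (RatFunc K) u2 / algebraMap (Polynomial K) (RatFunc K) v2} :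
          Set (RatFunc K)) = ⊤) :
    MvPolynomial.degreeOf 1 F = max u1.natDegree v1.natDegree ∧
    MvPolynomial.degreeOf 0 F = max u2.natDegree v2.natDegree := by
  rw [← aux_deg u1 v1 hv1 hcop1, ← aux_deg u2 v2 hv2 hcop2]
  refine ⟨?_, ?_⟩
  · let s : Fin 2 ≃ Fin 2 := Equiv.swap 0 1
    have hirr : Irreducible (MvPolynomial.renameEquiv K s F) :=
      (MulEquiv.irreducible_iff (MvPolynomial.renameEquiv K s)).2 hF
    rw [← MvPolynomial.degreeOf_rename_of_injective s.injective]
    have hs1 : s 1 = 0 := Equiv.swap_apply_right 0 1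
    rw [hs1]
    refine aux_mv _ _ _ hirr ?_ hproper
    rw [← hvanish, MvPolynomial.aeval_rename]
    congr 2
    ext i
    fin_cases i <;> simp [s]
  · refine aux_mv _ _ F hF hvanish ?_
    rw [Set.pair_comm]; exact hproper
end

section
/- Let K be a field and let u1, v1, u2, v2 ∈ K[t] be polynomials with v1 ≠ 0, v2 ≠ 0, gcd(u1, v1) = 1, gcd(u2, v2) = 1, max(deg u1, deg v1) ≥ 1 and max(deg u2, deg v2) ≥ 1. Let F ∈ K[x,y] be an irreducible bivariate polynomial such that F(u1(t)/v1(t), u2(t)/v2(t)) = 0 in K(t), and suppose the parametrization is proper, i.e., the subfield of K(t) generated over K by u1/v1 and u2/v2 is all of K(t). Then the resultant with respect to t of the polynomials u1(t) − x·v1(t) and u2(t) − y·v2(t), regarded as polynomials in t with coefficients in the ring K[x,y], equals c·F(x,y) for some nonzero constant c ∈ K. -/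
open Polynomial

/-- The Sylvester matrix of two polynomials `p` and `q` over a commutative ring,
where `p` is regarded as a polynomial of degree (at most) `n` and `q` as a
polynomial of degree (at most) `m`.  It has `m` rows built from the coefficients
of `p` and `n` rows built from the coefficients of `q`. -/
def sylvesterMatrix {R : Type*} [CommRing R] (n m : ℕ) (p q : Polynomial R) :
    Matrix (Fin (m + n)) (Fin (m + n)) R :=
  Matrix.of fun r j =>
    if (r : ℕ) < m then
      -- a row `(0,…,0, a_n, a_{n-1}, …, a_0, 0, …, 0)` of coefficients of `p`
      (if (r : ℕ) ≤ (j : ℕ) ∧ (j : ℕ) ≤ (r : ℕ) + n then p.coeff (n + r - j) else 0)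
    else
      -- a row `(0,…,0, b_m, b_{m-1}, …, b_0, 0, …, 0)` of coefficients of `q`
      (if (r : ℕ) - m ≤ (j : ℕ) ∧ (j : ℕ) ≤ ((r : ℕ) - m) + m then
        q.coeff (m + ((r : ℕ) - m) - j) else 0)

/-- The resultant of `p` (of degree `n`) and `q` (of degree `m`): the determinant
of their Sylvester matrix. -/
def resultant {R : Type*} [CommRing R] (n m : ℕ) (p q : Polynomial R) : R :=
  (sylvesterMatrix n m p q).det


lemma aux_degree_det {K : Type*} [Field K] {N : ℕ} (k : Fin 2)
    (M : Matrix (Fin N) (Fin N) (MvPolynomial (Fin 2) K)) (w : Fin N → ℕ)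
    (h : ∀ i j, MvPolynomial.degreeOf k (M i j) ≤ w i) :
    MvPolynomial.degreeOf k M.det ≤ ∑ i, w i := by
  rw [← Matrix.det_transpose, Matrix.det_apply]
  refine (MvPolynomial.degreeOf_sum_le _ _ _).trans (Finset.sup_le fun σ _ => ?_)
  have h1 : MvPolynomial.degreeOf k (∏ i, M.transpose (σ i) i) ≤ ∑ i, w i :=
    (MvPolynomial.degreeOf_prod_le _ _ _).trans (Finset.sum_le_sum fun i _ => h _ _)
  rcases Int.units_eq_one_or (Equiv.Perm.sign σ) with h2 | h2 <;> rw [h2]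
  · simpa using h1
  · simpa using h1

lemma aux_sum_lt (m n : ℕ) : (∑ i : Fin (m + n), if (i : ℕ) < m then 1 else 0) = m := by
  rw [Fin.sum_univ_add]
  simp

lemma aux_sum_ge (m n : ℕ) : (∑ i : Fin (m + n), if (i : ℕ) < m then 0 else 1) = n := by
  rw [Fin.sum_univ_add]
  simp

noncomputable def auxP {K : Type*} [Field K] (k : Fin 2) (u v : Polynomial K) :
    Polynomial (MvPolynomial (Fin 2) K) :=
  u.map (algebraMap K (MvPolynomial (Fin 2) K)) -
          Polynomial.C (MvPolynomial.X k) * v.map (algebraMap K (MvPolynomial (Fin 2) K))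

lemma aux_deg_coeff {K : Type*} [Field K] (k l : Fin 2) (u v : Polynomial K) (i : ℕ) :
    MvPolynomial.degreeOf l ((auxP k u v).coeff i) ≤ if l = k then 1 else 0 := by
  simp only [auxP, coeff_sub, coeff_map, coeff_C_mul]
  refine (MvPolynomial.degreeOf_sub_le _ _ _).trans (max_le ?_ ?_)
  · simp [MvPolynomial.algebraMap_eq]
  · rw [MvPolynomial.algebraMap_eq, mul_comm]
    refine (MvPolynomial.degreeOf_C_mul_le _ _ _).trans ?_
    rw [MvPolynomial.degreeOf_X]

lemma aux_deg0 {K : Type*} [Field K] (n m : ℕ) (u1 v1 u2 v2 : Polynomial K) :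
    MvPolynomial.degreeOf 0 (_root_.resultant n m (auxP 0 u1 v1) (auxP 1 u2 v2)) ≤ m := by
  conv_rhs => rw [← aux_sum_lt m n]
  refine aux_degree_det _ _ _ fun i j => ?_
  simp only [sylvesterMatrix, Matrix.of_apply]
  split_ifs <;> first | simp; done | skip
  · simpa using aux_deg_coeff 0 0 u1 v1 _
  · simpa using aux_deg_coeff 1 0 u2 v2 _

lemma aux_deg1 {K : Type*} [Field K] (n m : ℕ) (u1 v1 u2 v2 : Polynomial K) :
    MvPolynomial.degreeOf 1 (_root_.resultant n m (auxP 0 u1 v1) (auxP 1 u2 v2)) ≤ n := by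
  conv_rhs => rw [← aux_sum_ge m n]
  refine aux_degree_det _ _ _ fun i j => ?_
  simp only [sylvesterMatrix, Matrix.of_apply]
  split_ifs <;> first | simp; done | skip
  · simpa using aux_deg_coeff 0 1 u1 v1 _
  · simpa using aux_deg_coeff 1 1 u2 v2 _

/-- reverses each of the two blocks -/
def auxPerm (m n : ℕ) : Equiv.Perm (Fin (m + n)) :=
  finSumFinEquiv.symm.trans ((Equiv.sumCongr Fin.revPerm Fin.revPerm).trans finSumFinEquiv)

lemma aux_sylv {R : Type*} [CommRing R] (n m : ℕ) (p q : Polynomial R) :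
    sylvesterMatrix n m p q =
      ((Polynomial.sylvester q p m n).transpose.submatrix (auxPerm m n) id).submatrix id
        Fin.revPerm := by
  ext r j
  induction r using Fin.addCases with
  | left r =>
    simp only [sylvesterMatrix, Polynomial.sylvester, auxPerm, Matrix.of_apply,
      Matrix.submatrix_apply, Matrix.transpose_apply, Equiv.trans_apply,
      finSumFinEquiv_symm_apply_castAdd, Equiv.sumCongr_apply, Sum.map_inl, Fin.revPerm_apply,
      finSumFinEquiv_apply_left, Fin.addCases_left, id, Fin.val_castAdd, Fin.val_rev, Set.mem_Icc,
      r.2, if_true]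
    have := j.2
    have := r.2
    by_cases h : (r : ℕ) ≤ j ∧ (j : ℕ) ≤ r + n
    · rw [if_pos h, if_pos (by omega)]; congr 1; omega
    · rw [if_neg h, if_neg (by omega)]
  | right r =>
    simp only [sylvesterMatrix, Polynomial.sylvester, auxPerm, Matrix.of_apply,
      Matrix.submatrix_apply, Matrix.transpose_apply, Equiv.trans_apply,
      finSumFinEquiv_symm_apply_natAdd, Equiv.sumCongr_apply, Sum.map_inr, Fin.revPerm_apply,
      finSumFinEquiv_apply_right, Fin.addCases_right, id, Fin.val_natAdd, Fin.val_rev, Set.mem_Icc]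
    have := j.2
    have := r.2
    rw [if_neg (by omega)]
    by_cases h : (r : ℕ) ≤ j ∧ (j : ℕ) ≤ r + m
    · rw [if_pos (by omega), if_pos (by omega)]; congr 1; omega
    · rw [if_neg (by omega), if_neg (by omega)]

lemma aux_res {R : Type*} [CommRing R] (n m : ℕ) (p q : Polynomial R) :
    _root_.resultant n m p q = Polynomial.resultant q p m n ∨
    _root_.resultant n m p q = - Polynomial.resultant q p m n := by
  have : _root_.resultant n m p q = (Equiv.Perm.sign (Fin.revPerm (n := m + n)) : ℤ) *
     ((Equiv.Perm.sign (auxPerm m n) : ℤ) * Polynomial.resultant q p m n) := by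
    rw [_root_.resultant, aux_sylv, Matrix.det_permute', Matrix.det_permute, Matrix.det_transpose]
    rfl
  rw [this]
  rcases Int.units_eq_one_or (Equiv.Perm.sign (auxPerm m n)) with h | h <;>
  rcases Int.units_eq_one_or (Equiv.Perm.sign (Fin.revPerm (n := m + n))) with h' | h' <;>
  simp [h, h']

lemma aux_natDegree {K : Type*} [Field K] (k : Fin 2) (u v : Polynomial K) :
    (auxP k u v).natDegree ≤ max u.natDegree v.natDegree := by
  refine (natDegree_sub_le _ _).trans (max_le_max natDegree_map_le ?_)
  exact (natDegree_C_mul_le _ _).trans natDegree_map_le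

lemma aux_map {K L : Type*} [Field K] [Field L] [Algebra K L] (f : Fin 2 → L) (k : Fin 2)
    (u v : Polynomial K) :
    (auxP k u v).map (MvPolynomial.aeval f : MvPolynomial (Fin 2) K →ₐ[K] L).toRingHom =
    u.map (algebraMap K L) - C (f k) * v.map (algebraMap K L) := by
  have h : ((MvPolynomial.aeval f : MvPolynomial (Fin 2) K →ₐ[K] L) :
      MvPolynomial (Fin 2) K →+* L).comp (MvPolynomial.C) = algebraMap K L := by
    ext; simp
  simp [auxP, Polynomial.map_map, MvPolynomial.algebraMap_eq, h]

lemma aux_vanish {K : Type*} [Field K] (u1 v1 u2 v2 : Polynomial K)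
    (hv1 : v1 ≠ 0) (hv2 : v2 ≠ 0) (n m : ℕ) (hn : max u1.natDegree v1.natDegree ≤ n)
    (hm : max u2.natDegree v2.natDegree ≤ m) (hn1 : 1 ≤ n) :
    MvPolynomial.aeval
        ![algebraMap (Polynomial K) (RatFunc K) u1 / algebraMap (Polynomial K) (RatFunc K) v1,
          algebraMap (Polynomial K) (RatFunc K) u2 / algebraMap (Polynomial K) (RatFunc K) v2]
        (Polynomial.resultant (auxP 1 u2 v2) (auxP 0 u1 v1) m n) = 0 := by
  set f := ![algebraMap (Polynomial K) (RatFunc K) u1 / algebraMap (Polynomial K) (RatFunc K) v1,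
          algebraMap (Polynomial K) (RatFunc K) u2 / algebraMap (Polynomial K) (RatFunc K) v2]
  obtain ⟨a, b, -, -, h⟩ := exists_mul_add_mul_eq_C_resultant (auxP 1 u2 v2) (auxP 0 u1 v1)
    ((aux_natDegree 1 u2 v2).trans hm) ((aux_natDegree 0 u1 v1).trans hn) (by right; omega)
  have h2 := congrArg (fun z => (z.map (MvPolynomial.aeval f :
    MvPolynomial (Fin 2) K →ₐ[K] RatFunc K).toRingHom).eval RatFunc.X) h
  simp only [Polynomial.map_add, Polynomial.map_mul, aux_map, eval_add, eval_mul, map_C, eval_C,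
    eval_sub, eval_map_algebraMap, RatFunc.aeval_X_left_eq_algebraMap] at h2
  have e1 : algebraMap (Polynomial K) (RatFunc K) v1 ≠ 0 := RatFunc.algebraMap_ne_zero hv1
  have e2 : algebraMap (Polynomial K) (RatFunc K) v2 ≠ 0 := RatFunc.algebraMap_ne_zero hv2
  have f0 : f 0 * algebraMap (Polynomial K) (RatFunc K) v1 = algebraMap _ _ u1 := by
    simp only [f, Matrix.cons_val_zero]; field_simp
  have f1 : f 1 * algebraMap (Polynomial K) (RatFunc K) v2 = algebraMap _ _ u2 := by
    change algebraMap (Polynomial K) (RatFunc K) u2 / algebraMap (Polynomial K) (RatFunc K) v2 *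
      algebraMap (Polynomial K) (RatFunc K) v2 = _
    field_simp
  rw [f0, f1] at h2
  simpa using h2.symm

lemma aux_ne_zero {K : Type*} (L : Type*) [Field K] [Field L] [Algebra K L] [IsAlgClosed L] (u1 v1 u2 v2 : Polynomial K)
    (hcop1 : IsCoprime u1 v1) (hcop2 : IsCoprime u2 v2)
    (hn : 1 ≤ max u1.natDegree v1.natDegree)
    (hm : 1 ≤ max u2.natDegree v2.natDegree) :
    Polynomial.resultant (auxP 1 u2 v2) (auxP 0 u1 v1) (max u2.natDegree v2.natDegree)
      (max u1.natDegree v1.natDegree) ≠ 0 := by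
  classical
  set n := max u1.natDegree v1.natDegree with hnn
  have hu2 : u2 ≠ 0 := by
    rintro rfl
    rw [isCoprime_zero_left] at hcop2
    simp [natDegree_eq_zero_of_isUnit hcop2] at hm
  have : Infinite L := inferInstance
  let S : Finset L := insert (algebraMap K L (u1.coeff n) / algebraMap K L (v1.coeff n))
    ((u2.map (algebraMap K L)).roots.toFinset.image (fun β => aeval β u1 / aeval β v1))
  obtain ⟨x0, hx0⟩ := Infinite.exists_notMem_finset S
  simp only [S, Finset.mem_insert, Finset.mem_image, not_or, not_exists, not_and] at hx0
  obtain ⟨hx1, hx2⟩ := hx0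
  intro h
  have h2 := congrArg (MvPolynomial.aeval ![x0, 0] : MvPolynomial (Fin 2) K →ₐ[K] L).toRingHom h
  rw [← resultant_map_map, aux_map, aux_map, map_zero] at h2
  rw [show (![x0, 0] : Fin 2 → L) 0 = x0 from rfl, show (![x0, 0] : Fin 2 → L) 1 = 0 from rfl,
    C_0, zero_mul, sub_zero] at h2
  set p := u1.map (algebraMap K L) - C x0 * v1.map (algebraMap K L) with hp
  have hcoef : p.coeff n ≠ 0 := by
    simp only [hp, coeff_sub, coeff_map, coeff_C_mul]
    intro h0
    by_cases hv : v1.coeff n = 0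
    · have hu : u1.coeff n = 0 := by simpa [hv] using h0
      rcases max_choice u1.natDegree v1.natDegree with hh | hh
      · rw [hnn, hh, coeff_natDegree, leadingCoeff_eq_zero] at hu
        subst hu
        simp at hh
        rw [hnn, hh] at hn; simp at hn
      · rw [hnn, hh, coeff_natDegree, leadingCoeff_eq_zero] at hv
        subst hv
        simp at hh
        rw [hnn, hh] at hn; simp at hn
    · apply hx1
      have : algebraMap K L (v1.coeff n) ≠ 0 := by simpa using hv
      rw [eq_div_iff this]
      linear_combination -h0
  have hdeg : p.natDegree = n := by
    refine le_antisymm ?_ (le_natDegree_of_ne_zero hcoef)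
    refine (natDegree_sub_le _ _).trans (max_le_max natDegree_map_le ?_)
    exact (natDegree_C_mul_le _ _).trans natDegree_map_le
  have hd : (u2.map (algebraMap K L)).natDegree ≤ max u2.natDegree v2.natDegree := by simp
  obtain ⟨k, hk⟩ := Nat.exists_eq_add_of_le hd
  rw [hk, resultant_add_left_deg _ _ _ _ _ le_rfl] at h2
  have h3 : Polynomial.resultant (u2.map (algebraMap K L)) p = 0 := by
    rw [hdeg]
    simpa [hcoef] using h2
  rw [resultant_eq_zero_iff] at h3
  apply h3.2
  rw [Polynomial.isCoprime_iff_aeval_ne_zero_of_isAlgClosed L L]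
  intro β
  by_contra! hc
  obtain ⟨hc1, hc2⟩ := hc
  simp only [aeval_map_algebraMap] at hc1
  have hc2' : aeval β u1 = x0 * aeval β v1 := by
    simpa [hp, sub_eq_zero] using hc2
  have hv : aeval β v1 ≠ 0 := by
    intro hv
    obtain ⟨a, b, hab⟩ := hcop1
    have := congrArg (aeval β) hab
    simp [hv, hc2'] at this
  refine hx2 β ?_ ?_
  · simp only [Multiset.mem_toFinset]
    rw [mem_roots (by simpa using hu2)]
    simpa [IsRoot, eval_map_algebraMap] using hc1
  · rw [hc2']; field_simp
open IntermediateField in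
lemma aux_finrank {K : Type*} [Field K] (u v : Polynomial K) (hv : v ≠ 0) (h : IsCoprime u v) :
    Module.finrank (IntermediateField.adjoin K {algebraMap (Polynomial K) (RatFunc K) u /
      algebraMap (Polynomial K) (RatFunc K) v}) (RatFunc K) = max u.natDegree v.natDegree := by
  rw [RatFunc.finrank_eq_max_natDegree]
  set f := algebraMap (Polynomial K) (RatFunc K) u / algebraMap (Polynomial K) (RatFunc K) v with hf
  have e : f.num * v = u * f.denom := (RatFunc.num_mul_eq_mul_denom_iff hv).2 hf
  have hc := RatFunc.isCoprime_num_denom f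
  have hd : Associated f.denom v := associated_of_dvd_dvd
    (hc.symm.dvd_of_dvd_mul_left ⟨u, by rw [e, mul_comm]⟩)
    (h.symm.dvd_of_dvd_mul_left ⟨f.num, by rw [← e, mul_comm]⟩)
  have hn : Associated f.num u := associated_of_dvd_dvd
    (hc.dvd_of_dvd_mul_right ⟨v, by rw [e]⟩)
    (h.dvd_of_dvd_mul_right ⟨f.denom, by rw [← e]⟩)
  rw [natDegree_eq_of_degree_eq (degree_eq_degree_of_associated hd),
    natDegree_eq_of_degree_eq (degree_eq_degree_of_associated hn)]

lemma aux_transc {K : Type*} [Field K] (u v : Polynomial K) (hv : v ≠ 0) (h : IsCoprime u v)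
    (hn : 1 ≤ max u.natDegree v.natDegree) :
    Transcendental K (algebraMap (Polynomial K) (RatFunc K) u /
      algebraMap (Polynomial K) (RatFunc K) v) := by
  apply RatFunc.transcendental_of_ne_C
  rintro ⟨c, hc⟩
  have h1 := aux_finrank u v hv h
  rw [RatFunc.finrank_eq_max_natDegree, hc] at h1
  simp at h1
  omega

lemma aux_eval {K : Type*} [Field K] (x y : RatFunc K) (F : MvPolynomial (Fin 2) K) :
    MvPolynomial.aeval ![x, y] F =
    (MvPolynomial.finSuccEquiv K 1 F).eval₂
      ((MvPolynomial.aeval (fun _ => y) : MvPolynomial (Fin 1) K →ₐ[K] RatFunc K) :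
        MvPolynomial (Fin 1) K →+* RatFunc K) x := by
  induction F using MvPolynomial.induction_on with
  | C a => simp [MvPolynomial.finSuccEquiv_apply]
  | add p q hp hq => simp [hp, hq, eval₂_add]
  | mul_X p i hp =>
    rw [map_mul, map_mul, eval₂_mul, hp]
    congr 1
    fin_cases i
    · simp [MvPolynomial.finSuccEquiv_X_zero]
    · have := MvPolynomial.finSuccEquiv_X_succ (R := K) (n := 1) (j := 0)
      simp at this
      simp [this]

lemma aux_inj {K L : Type*} [Field K] [Field L] [Algebra K L] (y : L) (hy : Transcendental K y) :
    Function.Injective (MvPolynomial.aeval (fun _ => y) : MvPolynomial (Fin 1) K →ₐ[K] L) := by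
  have : AlgebraicIndependent K (fun _ : Fin 1 => y) := by
    rw [algebraicIndependent_unique_type_iff]
    exact hy
  exact this

open IntermediateField in
lemma aux_le {K : Type*} [Field K] (x y : RatFunc K) (hy : Transcendental K y)
    (htop : IntermediateField.adjoin K ({x, y} : Set (RatFunc K)) = ⊤)
    (F : MvPolynomial (Fin 2) K) (hF : F ≠ 0) (h0 : MvPolynomial.aeval ![x, y] F = 0) :
    Module.finrank K⟮y⟯ (RatFunc K) ≤ MvPolynomial.degreeOf 0 F := by
  let y' : K⟮y⟯ := ⟨y, mem_adjoin_simple_self K y⟩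
  have hy' : Transcendental K y' := by
    intro h
    exact hy ((isAlgebraic_algebraMap_iff (A := RatFunc K)
      (FaithfulSMul.algebraMap_injective K⟮y⟯ (RatFunc K))).2 h)
  let φ : MvPolynomial (Fin 1) K →+* K⟮y⟯ :=
    (MvPolynomial.aeval (fun _ => y') : MvPolynomial (Fin 1) K →ₐ[K] K⟮y⟯)
  have hφ : Function.Injective φ := aux_inj y' hy'
  let G := (MvPolynomial.finSuccEquiv K 1 F).map φ
  have hG : G ≠ 0 := (Polynomial.map_ne_zero_iff hφ).2 (by simpa using hF)
  have hc : (algebraMap K⟮y⟯ (RatFunc K)).comp φ =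
      ((MvPolynomial.aeval (fun _ => y) : MvPolynomial (Fin 1) K →ₐ[K] RatFunc K) :
        MvPolynomial (Fin 1) K →+* RatFunc K) := by
    apply MvPolynomial.ringHom_ext
    · intro r; simp [φ]
    · intro i; simp [φ]; rfl
  have hG0 : aeval x G = 0 := by
    rw [aux_eval] at h0
    rw [aeval_def, eval₂_map, hc, h0]
  have hdeg : G.natDegree = MvPolynomial.degreeOf 0 F := by
    rw [natDegree_map_eq_of_injective hφ, MvPolynomial.natDegree_finSuccEquiv]
  have hint : IsIntegral K⟮y⟯ x := isAlgebraic_iff_isIntegral.1 ⟨G, hG, hG0⟩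
  have ht : K⟮y⟯⟮x⟯ = ⊤ := by
    have := adjoin_simple_adjoin_simple K y x
    rw [Set.pair_comm, htop] at this
    exact restrictScalars_eq_top_iff.1 this
  rw [← hdeg, ← finrank_top', ← ht, adjoin.finrank hint]
  exact natDegree_le_of_dvd (minpoly.dvd _ _ hG0) hG

lemma aux_lift {A L : Type*} [CommRing A] [IsDomain A] [Field L] (g : A →+* L)
    (hg : Function.Injective g) :
    ∃ ψ : FractionRing A →+* L, ψ.comp (algebraMap A (FractionRing A)) = g :=
  ⟨IsFractionRing.lift hg, RingHom.ext fun z => IsFractionRing.lift_algebraMap hg z⟩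

lemma aux_dvd {K : Type*} [Field K] (x y : RatFunc K) (hy : Transcendental K y)
    (F R : MvPolynomial (Fin 2) K) (hF : Irreducible F) (h0 : MvPolynomial.aeval ![x, y] F = 0)
    (hd : MvPolynomial.degreeOf 0 F ≠ 0)
    (hR : MvPolynomial.aeval ![x, y] R = 0) : F ∣ R := by
  let e := MvPolynomial.finSuccEquiv K 1
  rw [← map_dvd_iff e]
  have hi : Irreducible (e F) := (MulEquiv.irreducible_iff e).2 hF
  have hp : (e F).IsPrimitive := hi.isPrimitive (by
    rwa [MvPolynomial.natDegree_finSuccEquiv])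
  have hi' : Irreducible ((e F).map (algebraMap (MvPolynomial (Fin 1) K) (FractionRing (MvPolynomial (Fin 1) K)))) :=
    (hp.irreducible_iff_irreducible_map_fraction_map).1 hi
  refine hp.dvd_of_fraction_map_dvd_fraction_map (K := (FractionRing (MvPolynomial (Fin 1) K))) ?_
  by_contra hnd
  obtain ⟨a, b, hab⟩ := (hi'.coprime_iff_not_dvd).2 hnd
  obtain ⟨ψ, hψ⟩ := aux_lift ((MvPolynomial.aeval (fun _ => y) :
      MvPolynomial (Fin 1) K →ₐ[K] RatFunc K) : MvPolynomial (Fin 1) K →+* RatFunc K)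
      (aux_inj y hy)
  rw [aux_eval] at h0 hR
  have := congrArg (fun z => z.eval₂ ψ x) hab
  simp [eval₂_add, eval₂_mul, eval₂_map, hψ] at this
  rw [h0, hR] at this
  simp at this

/-- **Theorem 2 (implicitization by resultants).**
If `(u1/v1, u2/v2)` is a proper rational parametrization in lowest terms of the
irreducible curve defined by `F`, then
`Res_t (u1(t) - x·v1(t), u2(t) - y·v2(t)) = c · F(x,y)` for some nonzero `c ∈ K`. -/
theorem resultant_eq_implicit_equation
    (K : Type*) [Field K]
    (u1 v1 u2 v2 : Polynomial K)
    (hv1 : v1 ≠ 0) (hv2 : v2 ≠ 0)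
    (hcop1 : IsCoprime u1 v1) (hcop2 : IsCoprime u2 v2)
    (hn : 1 ≤ max u1.natDegree v1.natDegree)
    (hm : 1 ≤ max u2.natDegree v2.natDegree)
    (F : MvPolynomial (Fin 2) K) (hF : Irreducible F)
    (hvanish :
      MvPolynomial.aeval
        ![algebraMap (Polynomial K) (RatFunc K) u1 / algebraMap (Polynomial K) (RatFunc K) v1,
          algebraMap (Polynomial K) (RatFunc K) u2 / algebraMap (Polynomial K) (RatFunc K) v2]
        F = 0)
    (hproper :
      IntermediateField.adjoin K
        ({algebraMap (Polynomial K) (RatFunc K) u1 / algebraMap (Polynomial K) (RatFunc K) v1,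
          algebraMap (Polynomial K) (RatFunc K) u2 / algebraMap (Polynomial K) (RatFunc K) v2} :
          Set (RatFunc K)) = ⊤) :
    ∃ c : K, c ≠ 0 ∧
      resultant (max u1.natDegree v1.natDegree) (max u2.natDegree v2.natDegree)
        (u1.map (algebraMap K (MvPolynomial (Fin 2) K)) -
          Polynomial.C (MvPolynomial.X 0) * v1.map (algebraMap K (MvPolynomial (Fin 2) K)))
        (u2.map (algebraMap K (MvPolynomial (Fin 2) K)) -
          Polynomial.C (MvPolynomial.X 1) * v2.map (algebraMap K (MvPolynomial (Fin 2) K)))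
      = MvPolynomial.C c * F := by
  set x := algebraMap (Polynomial K) (RatFunc K) u1 / algebraMap (Polynomial K) (RatFunc K) v1
    with hx
  set y := algebraMap (Polynomial K) (RatFunc K) u2 / algebraMap (Polynomial K) (RatFunc K) v2
    with hy
  change ∃ c : K, c ≠ 0 ∧ _root_.resultant _ _ (auxP 0 u1 v1) (auxP 1 u2 v2) = _
  set n := max u1.natDegree v1.natDegree with hnn
  set m := max u2.natDegree v2.natDegree with hmm
  set R := _root_.resultant n m (auxP 0 u1 v1) (auxP 1 u2 v2) with hR
  have hR0 : R ≠ 0 := by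
    have := aux_ne_zero (AlgebraicClosure K) u1 v1 u2 v2 hcop1 hcop2 hn hm
    rcases aux_res n m (auxP 0 u1 v1) (auxP 1 u2 v2) with h | h <;> rw [hR, h]
    · exact this
    · exact neg_ne_zero.2 this
  have hRv : MvPolynomial.aeval ![x, y] R = 0 := by
    have := aux_vanish u1 v1 u2 v2 hv1 hv2 n m le_rfl le_rfl hn
    rcases aux_res n m (auxP 0 u1 v1) (auxP 1 u2 v2) with h | h <;> rw [hR, h]
    · exact this
    · rw [map_neg, this, neg_zero]
  have hxt : Transcendental K x := aux_transc u1 v1 hv1 hcop1 hn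
  have hyt : Transcendental K y := aux_transc u2 v2 hv2 hcop2 hm
  have hF0 : m ≤ MvPolynomial.degreeOf 0 F := by
    rw [hmm, ← aux_finrank u2 v2 hv2 hcop2]
    exact aux_le x y hyt hproper F hF.ne_zero hvanish
  have hF1 : n ≤ MvPolynomial.degreeOf 1 F := by
    rw [hnn, ← aux_finrank u1 v1 hv1 hcop1]
    have hinj : Function.Injective (Equiv.swap (0 : Fin 2) 1) := Equiv.injective _
    have h := aux_le y x hxt (by rw [Set.pair_comm]; exact hproper)
      (MvPolynomial.rename (Equiv.swap (0 : Fin 2) 1) F)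
      ((map_ne_zero_iff _ (MvPolynomial.rename_injective _ hinj)).2 hF.ne_zero) (by
        rw [MvPolynomial.aeval_rename, ← hvanish]
        congr 2
        funext i
        fin_cases i <;> simp)
    have h2 := MvPolynomial.degreeOf_rename_of_injective (p := F) hinj 1
    rw [Equiv.swap_apply_right] at h2
    rwa [h2] at h
  obtain ⟨G, hG⟩ := aux_dvd x y hyt F R hF hvanish (by omega) hRv
  have hG0 : G ≠ 0 := by rintro rfl; simp [hG] at hR0
  have d0 := aux_deg0 n m u1 v1 u2 v2
  have d1 := aux_deg1 n m u1 v1 u2 v2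
  rw [← hR, hG, MvPolynomial.degreeOf_mul_eq hF.ne_zero hG0] at d0 d1
  have hGC : G = MvPolynomial.C (G.coeff 0) := by
    rw [← MvPolynomial.totalDegree_eq_zero_iff_eq_C, MvPolynomial.totalDegree_eq_zero_iff]
    intro s hs i
    have := MvPolynomial.monomial_le_degreeOf i hs
    fin_cases i
    · simp at this ⊢; omega
    · simp at this ⊢; omega
  refine ⟨G.coeff 0, fun h => hG0 (by rw [hGC, h, map_zero]), ?_⟩
  rw [← hGC, hG, mul_comm]
end

section
/- Let K be an infinite field and let u1, v1, u2, v2 ∈ K[t] be polynomials with v1 ≠ 0, v2 ≠ 0, gcd(u1, v1) = 1, gcd(u2, v2) = 1, and such that the rational function u1/v1 ∈ K(t) is not a constant. Let F ∈ K[x,y] be an irreducible bivariate polynomial with deg_x F = m and deg_y F = n such that F(u1/v1, u2/v2) = 0 in K(t). If G ∈ K[x,y] satisfies deg_x G ≤ m, deg_y G ≤ n and G(u1/v1, u2/v2) = 0 in K(t), then G = c·F for some constant c ∈ K. -/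
open Polynomial in
theorem aux_dvd_s3 {R L : Type*} [CommRing R] [IsDomain R] [NormalizedGCDMonoid R] [Field L]
    [Algebra R L] (hinj : Function.Injective (algebraMap R L)) (F G : R[X]) (y : L)
    (hF : Irreducible F) (h1 : aeval y F = 0) (h2 : aeval y G = 0) : F ∣ G := by
  have hdeg : F.natDegree ≠ 0 := by
    intro h
    rw [Polynomial.eq_C_of_natDegree_eq_zero h, aeval_C] at h1
    have h0 := (map_eq_zero_iff _ hinj).1 h1
    apply hF.ne_zero
    rw [Polynomial.eq_C_of_natDegree_eq_zero h, h0, C_0]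
  have hp := hF.isPrimitive hdeg
  have : FaithfulSMul R L := (faithfulSMul_iff_algebraMap_injective R L).2 hinj
  let _ := FractionRing.liftAlgebra R L
  have hirr := (hp.irreducible_iff_irreducible_map_fraction_map (K := FractionRing R)).1 hF
  apply hp.dvd_of_fraction_map_dvd_fraction_map (K := FractionRing R)
  have h1' : aeval y (F.map (algebraMap R (FractionRing R))) = 0 := by
    rwa [aeval_map_algebraMap]
  have h2' : aeval y (G.map (algebraMap R (FractionRing R))) = 0 := by
    rwa [aeval_map_algebraMap]
  by_contra hnd
  obtain ⟨a, b, hab⟩ := (hirr.coprime_iff_not_dvd).2 hnd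
  have := congrArg (aeval y) hab
  simp [h1', h2'] at this

theorem aux_dvd2 {K L : Type*} [Field K] [Field L] [Algebra K L] (x y : L)
    (htr : Transcendental K x) (F G : MvPolynomial (Fin 2) K) (hF : Irreducible F)
    (hFvanish : MvPolynomial.aeval ![x, y] F = 0)
    (hGvanish : MvPolynomial.aeval ![x, y] G = 0) : F ∣ G := by
  let φ : MvPolynomial (Fin 1) K →ₐ[K] L := MvPolynomial.aeval ![x]
  have hφ : Function.Injective φ := by
    have h : AlgebraicIndependent K (![x] : Fin 1 → L) := by
      rw [algebraicIndependent_unique_type_iff]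
      simpa using htr
    exact h
  let _ : Algebra (MvPolynomial (Fin 1) K) (L) := φ.toRingHom.toAlgebra
  have ham : ∀ r, algebraMap (MvPolynomial (Fin 1) K) (L) r = φ r := fun _ => rfl
  let e : MvPolynomial (Fin 2) K ≃ₐ[K] Polynomial (MvPolynomial (Fin 1) K) :=
    (MvPolynomial.renameEquiv K (Equiv.swap (0 : Fin 2) 1)).trans (MvPolynomial.finSuccEquiv K 1)
  have : IsScalarTower K (MvPolynomial (Fin 1) K) (L) :=
    IsScalarTower.of_algebraMap_eq fun r => by
      exact (φ.commutes r).symm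
  have he : ∀ p, Polynomial.aeval y (e p) = MvPolynomial.aeval ![x, y] p := by
    intro p
    have : ((Polynomial.aeval (R := MvPolynomial (Fin 1) K) y).restrictScalars K).comp
        e.toAlgHom = MvPolynomial.aeval ![x, y] := by
      apply MvPolynomial.algHom_ext
      intro i
      fin_cases i
      · have : e (MvPolynomial.X 0) = Polynomial.C (MvPolynomial.X 0) := by
          simp only [e, AlgEquiv.trans_apply, MvPolynomial.renameEquiv_apply,
            MvPolynomial.rename_X, Equiv.swap_apply_left]
          exact MvPolynomial.finSuccEquiv_X_succ (j := (0 : Fin 1))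
        simp [this, ham, φ]
      · have : e (MvPolynomial.X 1) = Polynomial.X := by
          simp only [e, AlgEquiv.trans_apply, MvPolynomial.renameEquiv_apply,
            MvPolynomial.rename_X, Equiv.swap_apply_right]
          exact MvPolynomial.finSuccEquiv_X_zero
        simp [this]
    exact DFunLike.congr_fun this p
  let _ : NormalizedGCDMonoid (MvPolynomial (Fin 1) K) :=
    Classical.choice (inferInstance : Nonempty (NormalizedGCDMonoid (MvPolynomial (Fin 1) K)))
  have := aux_dvd_s3 (R := MvPolynomial (Fin 1) K) (L := L) hφ (e F) (e G) y
    ((MulEquiv.irreducible_iff e).2 hF) (by rw [he, hFvanish]) (by rw [he, hGvanish])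
  exact (map_dvd_iff e).1 this

/-- **Uniqueness of the implicit equation in `Π_{m,n}`.**
Over an infinite field, if `F` is an irreducible polynomial with `deg_x F = m`,
`deg_y F = n` vanishing on the (nonconstant) parametrization `(u1/v1, u2/v2)`,
then any `G` with `deg_x G ≤ m`, `deg_y G ≤ n` vanishing on the parametrization
is a constant multiple of `F`. -/
theorem implicit_equation_unique_up_to_constant
    (K : Type*) [Field K] [Infinite K]
    (u1 v1 u2 v2 : Polynomial K)
    (hv1 : v1 ≠ 0) (hv2 : v2 ≠ 0)
    (hcop1 : IsCoprime u1 v1) (hcop2 : IsCoprime u2 v2)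
    (hnonconst : ∀ c : K,
      algebraMap (Polynomial K) (RatFunc K) u1 / algebraMap (Polynomial K) (RatFunc K) v1 ≠
        algebraMap K (RatFunc K) c)
    (F : MvPolynomial (Fin 2) K) (hF : Irreducible F)
    (m n : ℕ)
    (hFx : MvPolynomial.degreeOf 0 F = m) (hFy : MvPolynomial.degreeOf 1 F = n)
    (hFvanish :
      MvPolynomial.aeval
        ![algebraMap (Polynomial K) (RatFunc K) u1 / algebraMap (Polynomial K) (RatFunc K) v1,
          algebraMap (Polynomial K) (RatFunc K) u2 / algebraMap (Polynomial K) (RatFunc K) v2]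
        F = 0)
    (G : MvPolynomial (Fin 2) K)
    (hGx : MvPolynomial.degreeOf 0 G ≤ m) (hGy : MvPolynomial.degreeOf 1 G ≤ n)
    (hGvanish :
      MvPolynomial.aeval
        ![algebraMap (Polynomial K) (RatFunc K) u1 / algebraMap (Polynomial K) (RatFunc K) v1,
          algebraMap (Polynomial K) (RatFunc K) u2 / algebraMap (Polynomial K) (RatFunc K) v2]
        G = 0) :
    ∃ c : K, G = MvPolynomial.C c * F := by
  set x := algebraMap (Polynomial K) (RatFunc K) u1 / algebraMap (Polynomial K) (RatFunc K) v1
    with hx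
  set y := algebraMap (Polynomial K) (RatFunc K) u2 / algebraMap (Polynomial K) (RatFunc K) v2
    with hy
  have htr : Transcendental K x := by
    apply RatFunc.transcendental_of_ne_C
    rintro ⟨c, hc⟩
    exact hnonconst c (by rw [hc]; rfl)
  have hdvd : F ∣ G :=
    aux_dvd2 x y htr F G hF hFvanish hGvanish
  obtain ⟨H, rfl⟩ := hdvd
  by_cases hH : H = 0
  · exact ⟨0, by simp [hH]⟩
  have h0 : MvPolynomial.degreeOf 0 H = 0 := by
    rw [MvPolynomial.degreeOf_mul_eq hF.ne_zero hH] at hGx; omega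
  have h1 : MvPolynomial.degreeOf 1 H = 0 := by
    rw [MvPolynomial.degreeOf_mul_eq hF.ne_zero hH] at hGy; omega
  have hv : H.vars = ∅ := by
    ext i
    rw [MvPolynomial.mem_vars_iff_degreeOf_ne_zero]
    fin_cases i <;> simp [h0, h1]
  refine ⟨H.coeff 0, ?_⟩
  have : H = MvPolynomial.C (H.coeff 0) := by
    rw [← MvPolynomial.totalDegree_eq_zero_iff_eq_C, MvPolynomial.totalDegree_eq_zero_iff]
    intro d hd i
    by_contra hne
    have : i ∈ H.vars := (MvPolynomial.mem_vars_iff_mem_support i).2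
      ⟨d, hd, Finsupp.mem_support_iff.2 hne⟩
    simp [hv] at this
  rw [← this, mul_comm]
end

section
/- Let K be a field and let F, G ∈ K[x,y] be nonzero bivariate polynomials having no common non-unit factor (i.e., every common divisor of F and G in K[x,y] is a unit). Then the set of common zeros {(a,b) ∈ K × K : F(a,b) = 0 and G(a,b) = 0} is finite. -/
open Polynomial in
lemma aux_elim {R : Type*} [CommRing R] [IsDomain R] [UniqueFactorizationMonoid R]
    (p q : R[X]) (hp : p ≠ 0) (h : ∀ d, d ∣ p → d ∣ q → IsUnit d) :
    ∃ a b : R[X], ∃ r : R, r ≠ 0 ∧ p * a + q * b = C r := by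
  classical
  by_cases hdeg : p.natDegree = 0
  · obtain ⟨c, rfl⟩ := natDegree_eq_zero.1 hdeg
    exact ⟨1, 0, c, by simpa using hp, by simp⟩
  obtain ⟨a, b, -, -, e⟩ :=
    exists_mul_add_mul_eq_C_resultant p q le_rfl le_rfl (Or.inl hdeg)
  refine ⟨a, b, _, ?_, e⟩
  intro h0
  let k := FractionRing R
  let φ := algebraMap R k
  have hφ : Function.Injective φ := IsFractionRing.injective R k
  have h1 : resultant (p.map φ) (q.map φ) = 0 := by
    rw [natDegree_map_eq_of_injective hφ, natDegree_map_eq_of_injective hφ,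
      resultant_map_map, h0, map_zero]
  obtain ⟨-, hnc⟩ := resultant_eq_zero_iff.1 h1
  apply hnc
  let : NormalizedGCDMonoid R := Nonempty.some inferInstance
  have hp' : p.map φ ≠ 0 := (Polynomial.map_ne_zero_iff hφ).2 hp
  have key : ∀ g f : R[X], ∀ d : k[X],
      g = (IsLocalization.integerNormalization (nonZeroDivisors R) d).primPart →
      d ∣ f.map φ → g ∣ f := by
    rintro g f d rfl hd
    apply (isPrimitive_primPart _).dvd_of_fraction_map_dvd_fraction_map (K := k)
    refine (Polynomial.map_dvd _ (primPart_dvd _)).trans ?_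
    obtain ⟨c, c0, hc⟩ := IsLocalization.integerNormalization_spec (nonZeroDivisors R) d
    rw [hc, Algebra.smul_def, Polynomial.algebraMap_apply]
    have hu : IsUnit (C (algebraMap R k c)) :=
      isUnit_C.2 (IsLocalization.map_units k (⟨c, c0⟩ : nonZeroDivisors R))
    exact (hu.mul_left_dvd).2 hd
  rw [← isRelPrime_iff_isCoprime]
  intro d hd1 hd2
  exact isUnit_or_eq_zero_of_isUnit_integerNormalization_primPart (R := R)
    (ne_zero_of_dvd_ne_zero hp' hd1) (h _ (key _ p d rfl hd1) (key _ q d rfl hd2))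

lemma aux_snd (K : Type*) [Field K]
    (F G : MvPolynomial (Fin 2) K) (hF : F ≠ 0)
    (h : ∀ d : MvPolynomial (Fin 2) K, d ∣ F → d ∣ G → IsUnit d) :
    {y : K | ∃ x : K,
      MvPolynomial.eval ![x, y] F = 0 ∧ MvPolynomial.eval ![x, y] G = 0}.Finite := by
  let e := MvPolynomial.finSuccEquiv K 1
  obtain ⟨a, b, r, hr, he⟩ := aux_elim (e F) (e G) (by simpa using hF) (by
    intro d h1 h2
    have := h (e.symm d) (by simpa using map_dvd e.symm h1) (by simpa using map_dvd e.symm h2)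
    simpa using this.map e)
  let u := MvPolynomial.uniqueAlgEquiv K (Fin 1)
  refine (Polynomial.finite_setOfPred_isRoot (p := u r) (by simpa using hr)).subset ?_
  rintro y ⟨x, h1, h2⟩
  have key : ∀ H, MvPolynomial.eval ![x, y] H =
      Polynomial.eval x (Polynomial.map (MvPolynomial.eval ![y]) (e H)) := fun H =>
    MvPolynomial.eval_eq_eval_mv_eval' ![y] x H
  rw [key] at h1 h2
  have h3 := congrArg (fun t => Polynomial.eval x (Polynomial.map (MvPolynomial.eval ![y]) t)) he
  simp [h1, h2] at h3
  have h4 : ∀ s : MvPolynomial (Fin 1) K, (u s).eval y = MvPolynomial.eval ![y] s := by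
    intro s
    induction s using MvPolynomial.induction_on with
    | C a => simp [u]
    | add p q hp hq => simp [hp, hq]
    | mul_X p i hp => rw [map_mul, Polynomial.eval_mul, hp, map_mul]; simp [u, Subsingleton.elim i 0]
  simp [h4, ← h3]

/-- **Bézout-type finiteness.**
Two nonzero bivariate polynomials over a field without a common non-unit factor
have only finitely many common zeros. -/
theorem finite_common_zeros_of_no_common_factor
    (K : Type*) [Field K]
    (F G : MvPolynomial (Fin 2) K) (hF : F ≠ 0) (hG : G ≠ 0)
    (hnocommon : ∀ d : MvPolynomial (Fin 2) K, d ∣ F → d ∣ G → IsUnit d) :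
    {p : K × K |
      MvPolynomial.eval ![p.1, p.2] F = 0 ∧ MvPolynomial.eval ![p.1, p.2] G = 0}.Finite := by
  let e := MvPolynomial.renameEquiv K (Equiv.swap (0 : Fin 2) 1)
  have hy := aux_snd K F G hF hnocommon
  have hx := aux_snd K (e F) (e G) (by simpa using hF) (by
    intro d h1 h2
    have := hnocommon (e.symm d) (by simpa using map_dvd e.symm h1)
      (by simpa using map_dvd e.symm h2)
    simpa using this.map e)
  refine (hx.prod hy).subset ?_
  rintro ⟨x, y⟩ ⟨h1, h2⟩
  have key : ∀ H, MvPolynomial.eval ![y, x] (e H) = MvPolynomial.eval ![x, y] H := by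
    intro H
    simp only [e, MvPolynomial.renameEquiv_apply, MvPolynomial.eval_rename]
    congr 2
    ext i
    fin_cases i <;> simp
  exact ⟨⟨y, by rw [key]; exact h1, by rw [key]; exact h2⟩, ⟨x, h1, h2⟩⟩
end

section
/- Let p1 and p2 be distinct prime numbers, let m, n be natural numbers, and set N = (m+1)(n+1). Consider the N × N matrix A over ℚ whose rows are indexed by k ∈ {0, 1, …, N−1} and whose columns are indexed by pairs (i, j) with 0 ≤ i ≤ m, 0 ≤ j ≤ n, with entry A[k, (i,j)] = (p1^k)^i · (p2^k)^j. Then A is invertible. -/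
/-- **Nonsingularity of the collocation matrix at nodes `(p1^k, p2^k)`.**
For distinct primes `p1, p2`, the `N × N` matrix (`N = (m+1)(n+1)`) with entry
`(p1^k)^i * (p2^k)^j` in row `k` and column `(i,j)` is invertible over `ℚ`. -/
theorem prime_power_collocation_matrix_invertible
    (p1 p2 : ℕ) (hp1 : Nat.Prime p1) (hp2 : Nat.Prime p2) (hne : p1 ≠ p2)
    (m n : ℕ) :
    IsUnit
      ((Matrix.of fun (k : Fin ((m + 1) * (n + 1))) (c : Fin (m + 1) × Fin (n + 1)) =>
          ((p1 : ℚ) ^ (k : ℕ)) ^ (c.1 : ℕ) * ((p2 : ℚ) ^ (k : ℕ)) ^ (c.2 : ℕ)).submatrix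
        id finProdFinEquiv.symm).det := by
  have hinj : Function.Injective (fun c : Fin (m + 1) × Fin (n + 1) =>
      (p1 : ℚ) ^ (c.1 : ℕ) * (p2 : ℚ) ^ (c.2 : ℕ)) := by
    rintro ⟨a, b⟩ ⟨c, d⟩ h
    have h' : p1 ^ (a : ℕ) * p2 ^ (b : ℕ) = p1 ^ (c : ℕ) * p2 ^ (d : ℕ) := by
      simp only at h
      exact_mod_cast h
    have hf : ∀ x y : ℕ, (p1 ^ x * p2 ^ y).factorization
        = Finsupp.single p1 x + Finsupp.single p2 y := by
      intro x y
      rw [Nat.factorization_mul (pow_ne_zero _ hp1.ne_zero) (pow_ne_zero _ hp2.ne_zero),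
        hp1.factorization_pow, hp2.factorization_pow]
    have h2 := congrArg Nat.factorization h'
    rw [hf, hf] at h2
    have e1 := DFunLike.congr_fun h2 p1
    have e2 := DFunLike.congr_fun h2 p2
    simp [Finsupp.single_apply, hne, hne.symm] at e1 e2
    exact Prod.ext (Fin.ext (by simpa using e1)) (Fin.ext (by simpa using e2))
  have key : ((Matrix.of fun (k : Fin ((m + 1) * (n + 1))) (c : Fin (m + 1) × Fin (n + 1)) =>
          ((p1 : ℚ) ^ (k : ℕ)) ^ (c.1 : ℕ) * ((p2 : ℚ) ^ (k : ℕ)) ^ (c.2 : ℕ)).submatrix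
        id finProdFinEquiv.symm) = (Matrix.vandermonde (fun l : Fin ((m + 1) * (n + 1)) =>
          (p1 : ℚ) ^ ((finProdFinEquiv.symm l).1 : ℕ)
            * (p2 : ℚ) ^ ((finProdFinEquiv.symm l).2 : ℕ))).transpose := by
    ext k l
    simp only [Matrix.submatrix_apply, Matrix.of_apply, Matrix.transpose_apply,
      Matrix.vandermonde_apply, id, mul_pow]
    rw [pow_right_comm, pow_right_comm (p2 : ℚ)]
  rw [key, Matrix.det_transpose, isUnit_iff_ne_zero, Matrix.det_vandermonde_ne_zero_iff]
  exact hinj.comp finProdFinEquiv.symm.injective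
end
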